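/- Let n ≥ 1 be odd, n₁ = (n+1)/2. Suppose k ∈ K₀(𝔭) and g ∈ {1, [[0,1],[ϖ,0]]}. Then there exist k′ ∈ w·K^0(𝔭) (equivalently, k′ ∈ K such that in any Iwasawa decomposition k′·a(ϖ^{n₁}) = b·k₂ with b upper triangular and k₂ ∈ K with lower-left entry c, one has min(v(c), n) ≤ (n−1)/2), an element g′ ∈ {1, [[0,1],[ϖⁿ,0]]}, and t ∈ F^× such that k·g·w·a(ϖ^{n₁}) = k′·a(ϖ^{n₁})·g′·z(t). -/

import Mathlib

open Matrix

section

variable {F : Type*} [Field F]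

/-- `x ∈ 𝔬`, the ring of integers of the discretely valued field `(F, v)`. -/
def InO (v : F → ℤ) (x : F) : Prop := x = 0 ∨ 0 ≤ v x

/-- `x ∈ 𝔭^r`. -/
def InP (v : F → ℤ) (r : ℕ) (x : F) : Prop := x = 0 ∨ (r : ℤ) ≤ v x

/-- `k ∈ K = GL₂(𝔬)`: integral entries and unit determinant. -/
def InK (v : F → ℤ) (k : Matrix (Fin 2) (Fin 2) F) : Prop :=
  (∀ i j : Fin 2, InO v (k i j)) ∧ k.det ≠ 0 ∧ v k.det = 0

/-- `k ∈ K^0(𝔭^r)`: in `K` with upper-right entry in `𝔭^r`. -/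
def InK0upper (v : F → ℤ) (r : ℕ) (k : Matrix (Fin 2) (Fin 2) F) : Prop :=
  InK v k ∧ InP v r (k 0 1)

/-- `k ∈ K₀(𝔭^r)`: in `K` with lower-left entry in `𝔭^r`. -/
def InK0lower (v : F → ℤ) (r : ℕ) (k : Matrix (Fin 2) (Fin 2) F) : Prop :=
  InK v k ∧ InP v r (k 1 0)

def aMat (y : F) : Matrix (Fin 2) (Fin 2) F := !![y, 0; 0, 1]

def nMat (x : F) : Matrix (Fin 2) (Fin 2) F := !![1, x; 0, 1]

def wMat : Matrix (Fin 2) (Fin 2) F := !![0, 1; -1, 0]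

def zMat (t : F) : Matrix (Fin 2) (Fin 2) F := !![t, 0; 0, t]

end

/-!
Conjugation by `w` sends `k` to the transpose of its adjugate, hence exchanges `K₀(𝔭^r)` and
`K^0(𝔭^r)`; this handles `g = 1`. For the other `g`, the element `[[0,1],[x,0]]` moves past
`w·a(y)`, becoming `[[0,1],[z,0]]` up to the scalar `-x/y`, whenever `x z = y²`. For odd
`n` the choice `x = ϖ`, `y = ϖ^{n₁}`, `z = ϖⁿ` satisfies this since `n + 1 = 2 n₁`.
-/

theorem map_neg_of_map_mul {R A : Type*} [NonUnitalNonAssocRing R] [AddMonoid A]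
    [IsAddTorsionFree A] {v : R → A}
    (hmul : ∀ x y : R, x ≠ 0 → y ≠ 0 → v (x * y) = v x + v y) (x : R) : v (-x) = v x := by
  rcases eq_or_ne x 0 with rfl | hx
  · rw [neg_zero]
  · apply nsmul_right_injective two_ne_zero
    simp only [two_nsmul, ← hmul _ _ hx hx, ← hmul _ _ (neg_ne_zero.2 hx) (neg_ne_zero.2 hx),
      neg_mul_neg]

section

variable {F : Type*} [Field F] {v : F → ℤ} {r : ℕ} {x y z : F} {k : Matrix (Fin 2) (Fin 2) F}

theorem InO.neg (hmul : ∀ x y : F, x ≠ 0 → y ≠ 0 → v (x * y) = v x + v y) (hx : InO v x) :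
    InO v (-x) := by
  simpa only [InO, neg_eq_zero, map_neg_of_map_mul hmul] using hx

theorem InP.neg (hmul : ∀ x y : F, x ≠ 0 → y ≠ 0 → v (x * y) = v x + v y) (hx : InP v r x) :
    InP v r (-x) := by
  simpa only [InP, neg_eq_zero, map_neg_of_map_mul hmul] using hx

theorem InK.transpose (hk : InK v k) : InK v kᵀ :=
  ⟨fun i j => hk.1 j i, by simpa only [det_transpose] using hk.2⟩

theorem InK.adjugate (hmul : ∀ x y : F, x ≠ 0 → y ≠ 0 → v (x * y) = v x + v y) (hk : InK v k) :
    InK v k.adjugate := by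
  obtain ⟨hint, hdet⟩ := hk
  refine ⟨fun i j => ?_, by simpa [det_adjugate] using hdet⟩
  rw [adjugate_fin_two]
  fin_cases i <;> fin_cases j
  exacts [hint 1 1, (hint 0 1).neg hmul, (hint 1 0).neg hmul, hint 0 0]

theorem InK0lower.adjugate_transpose
    (hmul : ∀ x y : F, x ≠ 0 → y ≠ 0 → v (x * y) = v x + v y) (hk : InK0lower v r k) :
    InK0upper v r k.adjugateᵀ := by
  refine ⟨(hk.1.adjugate hmul).transpose, ?_⟩
  rw [transpose_apply, adjugate_fin_two]
  exact hk.2.neg hmul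

theorem mul_wMat (k : Matrix (Fin 2) (Fin 2) F) : k * wMat = wMat * k.adjugateᵀ := by
  rw [adjugate_fin_two]
  ext i j
  fin_cases i <;> fin_cases j <;> simp [wMat, mul_apply]

theorem zMat_one : zMat (1 : F) = 1 :=
  one_fin_two.symm

theorem antidiagonal_mul_wMat_mul_aMat (hy : y ≠ 0) (hxz : x * z = y ^ 2) :
    !![0, 1; x, 0] * wMat * aMat y = wMat * aMat y * !![0, 1; z, 0] * zMat (-(x / y)) := by
  have hzx : z * (x / y) = y := by
    rw [mul_div_assoc', mul_comm z, hxz, pow_two, mul_div_cancel_right₀ _ hy]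
  simp [wMat, aMat, zMat, mul_div_cancel₀ _ hy, hzx]

end

theorem stmt_5_general {F : Type*} [Field F] (v : F → ℤ)
    (hmul : ∀ x y : F, x ≠ 0 → y ≠ 0 → v (x * y) = v x + v y)
    {x y z : F} (hy : y ≠ 0) (hxz : x * z = y ^ 2)
    (r : ℕ) (k : Matrix (Fin 2) (Fin 2) F) (hk : InK0lower v r k)
    (g : Matrix (Fin 2) (Fin 2) F) (hg : g = 1 ∨ g = !![0, 1; x, 0]) :
    ∃ (u g' : Matrix (Fin 2) (Fin 2) F) (t : F),
      InK0upper v r u ∧ (g' = 1 ∨ g' = !![0, 1; z, 0]) ∧ t ≠ 0 ∧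
        k * g * wMat * aMat y = (wMat * u) * aMat y * g' * zMat t := by
  have hu := hk.adjugate_transpose hmul
  rcases hg with rfl | rfl
  · refine ⟨k.adjugateᵀ, 1, 1, hu, Or.inl rfl, one_ne_zero, ?_⟩
    rw [← mul_wMat, zMat_one, mul_one, mul_one, mul_one]
  · have hx : x ≠ 0 := left_ne_zero_of_mul (hxz ▸ pow_ne_zero 2 hy)
    refine ⟨k.adjugateᵀ, !![0, 1; z, 0], -(x / y), hu, Or.inr rfl,
      neg_ne_zero.2 (div_ne_zero hx hy), ?_⟩
    calc k * !![0, 1; x, 0] * wMat * aMat y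
        = k * (!![0, 1; x, 0] * wMat * aMat y) := by simp only [Matrix.mul_assoc]
      _ = k * (wMat * aMat y * !![0, 1; z, 0] * zMat (-(x / y))) := by
        rw [antidiagonal_mul_wMat_mul_aMat hy hxz]
      _ = k * wMat * aMat y * !![0, 1; z, 0] * zMat (-(x / y)) := by
        simp only [Matrix.mul_assoc]
      _ = wMat * k.adjugateᵀ * aMat y * !![0, 1; z, 0] * zMat (-(x / y)) := by rw [mul_wMat]

/-- Lemma on Atkin–Lehner translates: for `k ∈ K₀(𝔭)` and
`g ∈ {1, [[0,1],[ϖ,0]]}`, one has `k·g·w·a(ϖ^{n₁}) = k′·a(ϖ^{n₁})·g′·z(t)` with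
`k′ ∈ w·K^0(𝔭)`, `g′ ∈ {1, [[0,1],[ϖⁿ,0]]}` and `t ∈ F^×`. -/
theorem stmt_5 {F : Type*} [Field F] [CharZero F] (v : F → ℤ)
    (hmul : ∀ x y : F, x ≠ 0 → y ≠ 0 → v (x * y) = v x + v y)
    (hadd : ∀ x y : F, x ≠ 0 → y ≠ 0 → x + y ≠ 0 → min (v x) (v y) ≤ v (x + y))
    (ϖ : F) (hϖ0 : ϖ ≠ 0) (hϖ : v ϖ = 1)
    (n n₁ : ℕ) (hn : 1 ≤ n) (hodd : Odd n) (hn₁ : n₁ = (n + 1) / 2)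
    (k : Matrix (Fin 2) (Fin 2) F) (hk : InK0lower v 1 k)
    (g : Matrix (Fin 2) (Fin 2) F) (hg : g = 1 ∨ g = !![0, 1; ϖ, 0]) :
    ∃ (u g' : Matrix (Fin 2) (Fin 2) F) (t : F),
      InK0upper v 1 u ∧ (g' = 1 ∨ g' = !![0, 1; ϖ ^ n, 0]) ∧ t ≠ 0 ∧
        k * g * wMat * aMat (ϖ ^ n₁) = (wMat * u) * aMat (ϖ ^ n₁) * g' * zMat t := by
  have hexp : ϖ * ϖ ^ n = (ϖ ^ n₁) ^ 2 := by
    rw [← pow_succ', ← pow_mul, hn₁, Nat.div_mul_cancel hodd.add_one.two_dvd]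
  exact stmt_5_general v hmul (pow_ne_zero n₁ hϖ0) hexp 1 k hk g hg
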